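/- arXiv:2002.01130 — 2 statements merged into one kernel-verified Lean document; each statement's English description precedes it below -/
import Mathlib

section
/- Let k be a commutative ring with unity, N ≥ 2 an integer, and q ∈ k a primitive N-th root of unity. Then for every integer l with 1 ≤ l ≤ N−1 the q-binomial coefficient [N choose l] equals 0 in k. -/
/-- The `q`-integer `[m] = 1 + q + ⋯ + q^{m-1}`. -/
def qInt {k : Type*} [CommRing k] (q : k) (m : ℕ) : k := ∑ i ∈ Finset.range m, q ^ i

/-- The `q`-factorial `[m]! = [m][m-1]⋯[1]`, with `[0]! = 1`. -/
def qFact {k : Type*} [CommRing k] (q : k) (m : ℕ) : k := ∏ i ∈ Finset.range m, qInt q (i + 1)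

/-- `QBinomSpec q N m l c` says that `c` is *the* `q`-binomial coefficient `[m choose l]`
(for `0 ≤ l ≤ m ≤ N`): in the special cases `(l,m) = (0,N), (N,N)` it is `1` by convention,
and otherwise it is characterized by `[l]! ⬝ [m-l]! ⬝ c = [m]!`. -/
def QBinomSpec {k : Type*} [CommRing k] (q : k) (N m l : ℕ) (c : k) : Prop :=
  ((m = N ∧ (l = 0 ∨ l = N)) → c = 1) ∧
  (¬(m = N ∧ (l = 0 ∨ l = N)) → qFact q l * qFact q (m - l) * c = qFact q m)

theorem qInt_mul_aux {k : Type*} [CommRing k] (q : k) (m : ℕ) :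
    qInt q m * (q - 1) = q ^ m - 1 := geom_sum_mul q m

theorem qFact_nzd_aux {k : Type*} [CommRing k] (N : ℕ) (q : k)
    (hq2 : ∀ l : ℕ, 1 ≤ l → l ≤ N - 1 → q ^ l - 1 ∈ nonZeroDivisors k)
    (m : ℕ) (hm : m ≤ N - 1) : qFact q m ∈ nonZeroDivisors k := by
  unfold qFact
  refine Submonoid.prod_mem _ fun i hi => ?_
  have hi' := Finset.mem_range.mp hi
  have h := hq2 (i + 1) (by omega) (by omega)
  rw [← qInt_mul_aux] at h
  exact (mul_mem_nonZeroDivisors.mp h).1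

/-- for `1 ≤ l ≤ N−1`, the q-binomial coefficient `[N choose l]` is `0`. -/
theorem q_binom_N_eq_zero
    {k : Type*} [CommRing k] (N : ℕ) (hN : 2 ≤ N) (q : k)
    (hq1 : q ^ N = 1)
    (hq2 : ∀ l : ℕ, 1 ≤ l → l ≤ N - 1 → q ^ l - 1 ∈ nonZeroDivisors k)
    (l : ℕ) (hl : 1 ≤ l) (hlN : l ≤ N - 1)
    (c : k) (hc : QBinomSpec q N N l c) :
    c = 0 := by
  have hne : ¬(N = N ∧ (l = 0 ∨ l = N)) := by omega
  have h := hc.2 hne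
  have h1 : q - 1 ∈ nonZeroDivisors k := by
    have := hq2 1 le_rfl (by omega)
    rwa [pow_one] at this
  have h0 : qInt q N = 0 := by
    have e := qInt_mul_aux q N
    rw [hq1, sub_self] at e
    exact (mul_right_mem_nonZeroDivisors_eq_zero_iff h1).mp e
  have hF : qFact q N = 0 := by
    refine Finset.prod_eq_zero (i := N - 1) (Finset.mem_range.mpr (by omega)) ?_
    rw [Nat.sub_add_cancel (by omega), h0]
  rw [hF] at h
  exact (mul_left_mem_nonZeroDivisors_eq_zero_iff
    (mul_mem (qFact_nzd_aux N q hq2 l hlN) (qFact_nzd_aux N q hq2 (N - l) (by omega)))).mp h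
end

section
/- Let k be a commutative ring with unity, N ≥ 2 an integer, q ∈ k a primitive N-th root of unity, U and V k-modules, and d_U, d_V k-linear endomorphisms of U and V respectively. For each s ∈ ℤ define the k-linear operator D_s on Hom_k(U,V) by D_s(g) = d_V∘g − q^s·(g∘d_U). Then for every r ∈ ℤ, every integer n with 1 ≤ n ≤ N, and every f ∈ Hom_k(U,V): (D_{r+n−1}∘⋯∘D_{r+1}∘D_r)(f) = Σ_{l=0}^{n} (−1)^l · q^{lr + l(l−1)/2} · [n choose l] · d_V^{n−l}∘f∘d_U^{l}. (This computes the n-th iterated differential of the Hom-complex Hom^{•q}(U,V) applied to a homogeneous morphism f of degree r.) -/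
/-- The differential of the Hom-complex `Hom^{•q}(U,V)` in degree `s`:
`D_s(g) = d_V ∘ g − q^s ⬝ (g ∘ d_U)`, where `q = ↑u` is a unit (so `q^s` makes sense
for `s : ℤ`). -/
def homDiff {k : Type*} [CommRing k] {U V : Type*} [AddCommGroup U] [AddCommGroup V]
    [Module k U] [Module k V] (u : kˣ) (dU : U →ₗ[k] U) (dV : V →ₗ[k] V)
    (s : ℤ) (g : U →ₗ[k] V) : U →ₗ[k] V :=
  dV ∘ₗ g - ((u ^ s : kˣ) : k) • (g ∘ₗ dU)

/-- Gaussian binomials by a `q`-Pascal recursion. -/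
def gaussB {k : Type*} [CommRing k] (q : k) : ℕ → ℕ → k
  | _, 0 => 1
  | 0, _ + 1 => 0
  | n + 1, l + 1 => gaussB q n (l + 1) + q ^ (n - l) * gaussB q n l

theorem gaussB_zero {k : Type*} [CommRing k] (q : k) (n : ℕ) : gaussB q n 0 = 1 := by
  cases n <;> simp [gaussB]

theorem gaussB_gt {k : Type*} [CommRing k] (q : k) (n : ℕ) :
    ∀ l, n < l → gaussB q n l = 0 := by
  induction n with
  | zero => intro l hl; cases l with
    | zero => omega
    | succ l => simp [gaussB]
  | succ n ih => intro l hl; cases l with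
    | zero => omega
    | succ l => simp [gaussB, ih (l + 1) (by omega), ih l (by omega)]

theorem gaussB_self {k : Type*} [CommRing k] (q : k) (n : ℕ) : gaussB q n n = 1 := by
  induction n with
  | zero => simp [gaussB]
  | succ n ih => simp [gaussB, ih, gaussB_gt q n (n + 1) (by omega)]

theorem qFact_succ' {k : Type*} [CommRing k] (q : k) (n : ℕ) :
    qFact q (n + 1) = qFact q n * qInt q (n + 1) := by
  simp [qFact, Finset.prod_range_succ]

theorem qInt_add' {k : Type*} [CommRing k] (q : k) (a b : ℕ) :
    qInt q (b + a) = qInt q b + q ^ b * qInt q a := by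
  simp [qInt, Finset.sum_range_add, Finset.mul_sum, pow_add]

theorem gaussB_fact {k : Type*} [CommRing k] (q : k) (n : ℕ) :
    ∀ a b, a + b = n → qFact q a * qFact q b * gaussB q n a = qFact q n := by
  induction n with
  | zero =>
    intro a b h
    obtain ⟨rfl, rfl⟩ : a = 0 ∧ b = 0 := by omega
    simp [gaussB, qFact]
  | succ n ih =>
    intro a b h
    rcases a with _ | a
    · obtain rfl : b = n + 1 := by omega
      simp [gaussB, qFact]
    rcases b with _ | b
    · obtain rfl : a = n := by omega
      rw [gaussB_self]; simp [qFact]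
    have h1 := ih (a + 1) b (by omega)
    have h2 := ih a (b + 1) (by omega)
    have h3 := qInt_add' q (a + 1) (b + 1)
    rw [show b + 1 + (a + 1) = n + 1 by omega] at h3
    rw [qFact_succ' q n, h3]
    simp only [gaussB]
    rw [show n - a = b + 1 by omega]
    rw [qFact_succ'] at h1 h2 ⊢
    rw [qFact_succ' q b]
    linear_combination qInt q (b + 1) * h1 + q ^ (b + 1) * qInt q (a + 1) * h2

theorem qFact_nzd {k : Type*} [CommRing k] (N : ℕ) (q : k)
    (hq2 : ∀ l : ℕ, 1 ≤ l → l ≤ N - 1 → q ^ l - 1 ∈ nonZeroDivisors k) (m : ℕ) (hm : m < N) :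
    qFact q m ∈ nonZeroDivisors k := by
  unfold qFact
  refine Submonoid.prod_mem _ fun i hi => ?_
  rw [Finset.mem_range] at hi
  have h := hq2 (i + 1) (by omega) (by omega)
  have e : qInt q (i + 1) * (q - 1) = q ^ (i + 1) - 1 := by
    unfold qInt; exact geom_sum_mul q (i + 1)
  rw [← e, mul_mem_nonZeroDivisors] at h
  exact h.1

theorem spec_eq_gaussB {k : Type*} [CommRing k] (N : ℕ) (q : k)
    (hq2 : ∀ l : ℕ, 1 ≤ l → l ≤ N - 1 → q ^ l - 1 ∈ nonZeroDivisors k)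
    (n l : ℕ) (hn : n ≤ N) (hl : l ≤ n) (c : k) (hc : QBinomSpec q N n l c) :
    c = gaussB q n l := by
  by_cases h : n = N ∧ (l = 0 ∨ l = N)
  · rw [hc.1 h]
    obtain ⟨rfl, rfl | rfl⟩ := h
    · rw [gaussB_zero]
    · rw [gaussB_self]
  · have h1 := hc.2 h
    have h2 := gaussB_fact q n l (n - l) (by omega)
    have h3 := mul_mem (qFact_nzd N q hq2 l (by omega)) (qFact_nzd N q hq2 (n - l) (by omega))
    exact (mul_cancel_left_mem_nonZeroDivisors h3).1 (h1.trans h2.symm)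

theorem foldl_general {k : Type*} [CommRing k] (u : kˣ)
    {U V : Type*} [AddCommGroup U] [AddCommGroup V] [Module k U] [Module k V]
    (dU : U →ₗ[k] U) (dV : V →ₗ[k] V) (r : ℤ) (f : U →ₗ[k] V) (a : ℕ → ℕ → k)
    (h0 : ∀ n, a n 0 = 1) (hgt : ∀ n, a n (n + 1) = 0)
    (hs : ∀ n l, l ≤ n → a (n + 1) (l + 1) =
      a n (l + 1) - ((u ^ (r + (n : ℤ)) : kˣ) : k) * a n l) (n : ℕ) :
    (List.range n).foldl (fun g (i : ℕ) => homDiff u dU dV (r + (i : ℤ)) g) f =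
      ∑ l ∈ Finset.range (n + 1), a n l • ((dV ^ (n - l)) ∘ₗ f ∘ₗ (dU ^ l)) := by
  induction n with
  | zero => ext x; simp [h0]
  | succ n ih =>
    rw [List.range_succ, List.foldl_append, ih]
    simp only [List.foldl_cons, List.foldl_nil, homDiff]
    have e1 : dV ∘ₗ (∑ l ∈ Finset.range (n + 1), a n l • ((dV ^ (n - l)) ∘ₗ f ∘ₗ (dU ^ l))) =
        ∑ l ∈ Finset.range (n + 1 + 1), a n l • ((dV ^ (n + 1 - l)) ∘ₗ f ∘ₗ (dU ^ l)) := by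
      rw [Finset.sum_range_succ _ (n + 1), hgt, zero_smul, add_zero]
      ext x
      simp only [LinearMap.comp_apply, LinearMap.sum_apply, map_sum, LinearMap.smul_apply, map_smul]
      refine Finset.sum_congr rfl fun l hl => ?_
      rw [Finset.mem_range] at hl
      rw [show n + 1 - l = (n - l) + 1 by omega, pow_succ']
      rfl
    have e2 : (∑ l ∈ Finset.range (n + 1), a n l • ((dV ^ (n - l)) ∘ₗ f ∘ₗ (dU ^ l))) ∘ₗ dU =
        ∑ l ∈ Finset.range (n + 1), a n l • ((dV ^ (n + 1 - (l + 1))) ∘ₗ f ∘ₗ (dU ^ (l + 1))) := by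
      ext x
      simp only [LinearMap.comp_apply, LinearMap.sum_apply, LinearMap.smul_apply]
      refine Finset.sum_congr rfl fun l hl => ?_
      rw [show n + 1 - (l + 1) = n - l by omega, pow_succ dU]
      rfl
    rw [e1, e2, Finset.sum_range_succ' _ (n + 1), Finset.sum_range_succ' _ (n + 1), h0, h0,
      Finset.smul_sum, add_sub_right_comm, ← Finset.sum_sub_distrib]
    congr 1
    refine Finset.sum_congr rfl fun l hl => ?_
    rw [Finset.mem_range] at hl
    rw [hs n l (by omega), sub_smul, mul_smul]

/-- for a homogeneous morphism `f` of degree `r` and `1 ≤ n ≤ N`,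
`(D_{r+n−1}∘⋯∘D_{r+1}∘D_r)(f) = Σ_{l=0}^{n} (−1)^l ⬝ q^{lr + l(l−1)/2} ⬝ [n choose l] ⬝
d_V^{n−l}∘f∘d_U^{l}`. -/
theorem homDiff_iterate_eq
    {k : Type*} [CommRing k] (N : ℕ) (hN : 2 ≤ N) (q : k)
    (hq1 : q ^ N = 1)
    (hq2 : ∀ l : ℕ, 1 ≤ l → l ≤ N - 1 → q ^ l - 1 ∈ nonZeroDivisors k)
    (u : kˣ) (hu : (u : k) = q)
    {U V : Type*} [AddCommGroup U] [AddCommGroup V] [Module k U] [Module k V]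
    (dU : U →ₗ[k] U) (dV : V →ₗ[k] V)
    (r : ℤ) (n : ℕ) (hn1 : 1 ≤ n) (hnN : n ≤ N)
    (c : ℕ → k) (hc : ∀ l ≤ n, QBinomSpec q N n l (c l))
    (f : U →ₗ[k] V) :
    (List.range n).foldl (fun g i => homDiff u dU dV (r + (i : ℤ)) g) f =
      ∑ l ∈ Finset.range (n + 1),
        ((-1 : k) ^ l * ((u ^ ((l : ℤ) * r) : kˣ) : k) * q ^ (l * (l - 1) / 2) * c l) •
          ((dV ^ (n - l)) ∘ₗ f ∘ₗ (dU ^ l)) := by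
  have hfold : ∀ (L : List ℕ), (L >>= fun a => pure (a : ℤ)) = L.map (fun a : ℕ => (a : ℤ)) := by
    intro L
    induction L with
    | nil => rfl
    | cons x L ih => simpa using ih
  rw [hfold, List.foldl_map]
  rw [foldl_general u dU dV r f (fun n l => (-1 : k) ^ l * ((u ^ ((l : ℤ) * r) : kˣ) : k) *
    q ^ (l * (l - 1) / 2) * gaussB q n l)]
  · refine Finset.sum_congr rfl fun l hl => ?_
    rw [Finset.mem_range] at hl
    rw [spec_eq_gaussB N q hq2 n l hnN (by omega) (c l) (hc l (by omega))]
  · intro n; simp [gaussB_zero]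
  · intro n; simp [gaussB_gt q n (n + 1) (by omega)]
  · intro n l hl
    have t : (l + 1) * (l + 1 - 1) / 2 = l * (l - 1) / 2 + l := by
      have h1 := Finset.sum_range_id_mul_two (l + 1)
      have h2 := Finset.sum_range_id_mul_two l
      rw [Finset.sum_range_succ] at h1
      omega
    have e : q ^ n = q ^ (n - l) * q ^ l := by rw [← pow_add]; congr 1; omega
    simp only [gaussB]
    rw [t, zpow_add, show ((l + 1 : ℕ) : ℤ) * r = (l : ℤ) * r + r by push_cast; ring, zpow_add,
      zpow_natCast]
    push_cast
    rw [hu, e]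
    ring
end
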